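/- arXiv:2005.07997 — 2 statements merged into one kernel-verified Lean document; each statement's English description precedes it below -/
import Mathlib

section
/- Suppose C is a contribution profile with C_i > 0 for all i ∈ N, every agent has at least one acceptable project, and utilities are normalized so that min{u_i(x) : x ∈ A, u_i(x) > 0} = 1 for every agent i. If δ is a Nash distribution for C, then for every agent i ∈ N: C_i ≤ u_i(δ) ≤ |C| · max_{x∈A} u_i(x). -/
/-!
A Nash distribution `δ` of the pool `V = |C|` gives every contributing agent positive utility,
because the uniform distribution has a positive Nash product. Along a segment from `δ` to another
distribution `δ'`, the logarithmic derivative of the Nash product at `δ` is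
`∑ i, C i * u i(δ') / u i(δ) - V`, so optimality forces `∑ i, C i * u i(δ') / u i(δ) ≤ V`. When
`δ'` spends the whole pool on `x`, the term of agent `i` alone gives
`C i * V * u i(x) / u i(δ) ≤ V`, that is, `C i * u i(x) ≤ u i(δ)`.
-/

open Finset

/-- A distribution of value `V`: nonnegative and sums to `V`. -/
def IsDistribution {A : Type*} [Fintype A] (δ : A → ℝ) (V : ℝ) : Prop :=
  (∀ x, 0 ≤ δ x) ∧ ∑ x, δ x = V

/-- Agent's (linear) utility of a distribution. -/
def util {A : Type*} [Fintype A] (u : A → ℝ) (δ : A → ℝ) : ℝ :=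
  ∑ x, δ x * u x

/-- The Nash product of a distribution (real exponentiation, `0 ^ 0 = 1`). -/
noncomputable def nashProduct {A N : Type*} [Fintype A] [Fintype N]
    (u : N → A → ℝ) (C : N → ℝ) (δ : A → ℝ) : ℝ :=
  ∏ i, (util (u i) δ) ^ (C i)

/-- A Nash distribution for contribution profile `C`: a maximizer of the Nash
product over `Δ(|C|)`. -/
def IsNashDistribution {A N : Type*} [Fintype A] [Fintype N]
    (u : N → A → ℝ) (C : N → ℝ) (δ : A → ℝ) : Prop :=
  IsDistribution δ (∑ i, C i) ∧
    ∀ δ' : A → ℝ, IsDistribution δ' (∑ i, C i) →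
      nashProduct u C δ' ≤ nashProduct u C δ

theorem deriv_nonpos_of_isLocalMaxOn_Icc {f : ℝ → ℝ} {a b : ℝ} (hab : a < b)
    (hf : IsLocalMaxOn f (Set.Icc a b) a) : deriv f a ≤ 0 := by
  by_cases hd : DifferentiableAt ℝ f a
  · have hcone : b - a ∈ posTangentConeAt (Set.Icc a b) a :=
      sub_mem_posTangentConeAt_of_segment_subset (segment_eq_Icc hab.le).subset
    have hmul : (b - a) * deriv f a ≤ 0 := by
      simpa using hf.hasFDerivWithinAt_nonpos hd.hasDerivAt.hasFDerivAt.hasFDerivWithinAt hcone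
    exact nonpos_of_mul_nonpos_right hmul (sub_pos.2 hab)
  · exact (deriv_zero_of_not_differentiableAt hd).le

theorem logDeriv_rpow_const {f : ℝ → ℝ} {x : ℝ} (hf : DifferentiableAt ℝ f x) (hx : 0 < f x)
    (c : ℝ) : logDeriv (fun t => f t ^ c) x = c * logDeriv f x := by
  have hpow : f x ^ c ≠ 0 := (Real.rpow_pos_of_pos hx c).ne'
  rw [logDeriv_apply, logDeriv_apply, (hf.hasDerivAt.rpow_const (.inl hx.ne')).deriv,
    Real.rpow_sub_one hx.ne']
  field_simp

section Distribution

open AffineMap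

variable {A : Type*} [Fintype A] {u δ : A → ℝ} {V : ℝ}

theorem util_nonneg (hu : ∀ x, 0 ≤ u x) (hδ : ∀ x, 0 ≤ δ x) : 0 ≤ util u δ :=
  sum_nonneg fun x _ => mul_nonneg (hδ x) (hu x)

theorem util_const_pos (hu : ∀ x, 0 ≤ u x) (hu' : ∃ x, 0 < u x) {c : ℝ} (hc : 0 < c) :
    0 < util u (fun _ => c) := by
  obtain ⟨x, hx⟩ := hu'
  exact sum_pos' (fun y _ => mul_nonneg hc.le (hu y)) ⟨x, mem_univ x, mul_pos hc hx⟩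

theorem util_single [DecidableEq A] (u : A → ℝ) (x : A) (V : ℝ) :
    util u (Pi.single x V) = V * u x := by
  simp [util, Pi.single_apply]

theorem util_lineMap (u δ δ' : A → ℝ) (t : ℝ) :
    util u (lineMap δ δ' t) = lineMap (util u δ) (util u δ') t := by
  simp only [util, lineMap_apply_module, Pi.add_apply, Pi.smul_apply, smul_eq_mul, add_mul,
    sum_add_distrib, mul_sum, mul_assoc]

theorem isDistribution_const [Nonempty A] (hV : 0 ≤ V) :
    IsDistribution (fun _ : A => V / Fintype.card A) V :=
  ⟨fun _ => by positivity, by simp [field]⟩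

theorem isDistribution_single [DecidableEq A] (x : A) (hV : 0 ≤ V) :
    IsDistribution (Pi.single x V) V := by
  have hnonneg : (0 : A → ℝ) ≤ Pi.single x V := Pi.single_nonneg.2 hV
  exact ⟨hnonneg, by simp⟩

theorem convex_setOf_isDistribution (A : Type*) [Fintype A] (V : ℝ) :
    Convex ℝ {δ : A → ℝ | IsDistribution δ V} := by
  intro δ hδ δ' hδ' a b ha hb hab
  refine ⟨fun x => add_nonneg (mul_nonneg ha (hδ.1 x)) (mul_nonneg hb (hδ'.1 x)), ?_⟩
  simp only [Pi.add_apply, Pi.smul_apply, smul_eq_mul, sum_add_distrib, ← mul_sum, hδ.2, hδ'.2]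
  rw [← add_mul, hab, one_mul]

theorem IsDistribution.util_le_mul_sup' [Nonempty A] (hδ : IsDistribution δ V) (u : A → ℝ) :
    util u δ ≤ V * univ.sup' univ_nonempty u := by
  rw [← hδ.2, sum_mul]
  exact sum_le_sum fun x hx => mul_le_mul_of_nonneg_left (le_sup' u hx) (hδ.1 x)

end Distribution

section NashProduct

open AffineMap

variable {A N : Type*} [Fintype A] [Fintype N] {u : N → A → ℝ} {C : N → ℝ} {δ δ' : A → ℝ}

theorem nashProduct_pos (hpos : ∀ i, C i ≠ 0 → 0 < util (u i) δ) : 0 < nashProduct u C δ := by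
  refine prod_pos fun i _ => ?_
  obtain hi | hi := eq_or_ne (C i) 0
  · simp [hi]
  · exact Real.rpow_pos_of_pos (hpos i hi) _

theorem logDeriv_nashProduct_lineMap (hpos : ∀ i, C i ≠ 0 → 0 < util (u i) δ) (δ' : A → ℝ) :
    logDeriv (fun t : ℝ => nashProduct u C (lineMap δ δ' t)) 0 =
      ∑ i, C i * util (u i) δ' / util (u i) δ - ∑ i, C i := by
  let f (i : N) (t : ℝ) : ℝ := lineMap (util (u i) δ) (util (u i) δ') t
  have hf (i : N) : HasDerivAt (f i) (util (u i) δ' - util (u i) δ) 0 := hasDerivAt_lineMap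
  have hf₀ (i : N) : f i 0 = util (u i) δ := lineMap_apply_zero _ _
  have hne (i : N) : f i 0 ^ C i ≠ 0 := by
    obtain hi | hi := eq_or_ne (C i) 0
    · simp [hi]
    · exact (Real.rpow_pos_of_pos (hf₀ i ▸ hpos i hi) _).ne'
  have hdiff (i : N) : DifferentiableAt ℝ (fun t => f i t ^ C i) 0 := by
    obtain hi | hi := eq_or_ne (C i) 0
    · simp [hi]
    · exact (hf i).differentiableAt.rpow_const (.inl (hf₀ i ▸ (hpos i hi).ne'))
  simp only [nashProduct, util_lineMap]
  rw [logDeriv_prod (fun i _ => hne i) (fun i _ => hdiff i), ← sum_sub_distrib]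
  refine sum_congr rfl fun i _ => ?_
  obtain hi | hi := eq_or_ne (C i) 0
  · simp [hi]
  · have hi₀ := hpos i hi
    rw [logDeriv_rpow_const (hf i).differentiableAt (hf₀ i ▸ hi₀), logDeriv_apply, (hf i).deriv,
      hf₀]
    field_simp

namespace IsNashDistribution

theorem util_pos (hδ : IsNashDistribution u C δ) (hu : ∀ i x, 0 ≤ u i x) (hC : ∀ i, 0 ≤ C i)
    (hacc : ∀ i, C i ≠ 0 → ∃ x, 0 < u i x) {i : N} (hi : C i ≠ 0) : 0 < util (u i) δ := by
  have : Nonempty A := (hacc i hi).nonempty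
  have hV : 0 < ∑ j, C j :=
    sum_pos' (fun j _ => hC j) ⟨i, mem_univ i, (hC i).lt_of_ne' hi⟩
  have hunif : 0 < nashProduct u C fun _ => (∑ j, C j) / Fintype.card A :=
    nashProduct_pos fun j hj => util_const_pos (hu j) (hacc j hj) (by positivity)
  have hprod : 0 < nashProduct u C δ := hunif.trans_le (hδ.2 _ (isDistribution_const hV.le))
  refine (util_nonneg (hu i) hδ.1.1).lt_of_ne' fun hzero => hprod.ne' ?_
  exact prod_eq_zero (mem_univ i) (by rw [hzero, Real.zero_rpow hi])

theorem sum_mul_util_div_util_le (hδ : IsNashDistribution u C δ)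
    (hpos : ∀ i, C i ≠ 0 → 0 < util (u i) δ) (hδ' : IsDistribution δ' (∑ i, C i)) :
    ∑ i, C i * util (u i) δ' / util (u i) δ ≤ ∑ i, C i := by
  have hmax : IsMaxOn (fun t : ℝ => nashProduct u C (lineMap δ δ' t)) (Set.Icc 0 1) 0 := by
    intro t ht
    simpa using hδ.2 _ ((convex_setOf_isDistribution A _).lineMap_mem hδ.1 hδ' ht)
  have hlog : logDeriv (fun t : ℝ => nashProduct u C (lineMap δ δ' t)) 0 ≤ 0 :=
    div_nonpos_of_nonpos_of_nonneg (deriv_nonpos_of_isLocalMaxOn_Icc one_pos hmax.localize)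
      (by simpa using (nashProduct_pos hpos).le)
  rwa [logDeriv_nashProduct_lineMap hpos, sub_nonpos] at hlog

theorem mul_le_util (hδ : IsNashDistribution u C δ) (hu : ∀ i x, 0 ≤ u i x) (hC : ∀ i, 0 ≤ C i)
    (hacc : ∀ i, C i ≠ 0 → ∃ x, 0 < u i x) (i : N) (x : A) : C i * u i x ≤ util (u i) δ := by
  classical
  have hnonneg (j : N) : 0 ≤ util (u j) δ := util_nonneg (hu j) hδ.1.1
  obtain hi | hi := eq_or_ne (C i) 0
  · simpa [hi] using hnonneg i
  have hpos (j : N) (hj : C j ≠ 0) : 0 < util (u j) δ := hδ.util_pos hu hC hacc hj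
  set V := ∑ j, C j
  have hV : 0 < V := sum_pos' (fun j _ => hC j) ⟨i, mem_univ i, (hC i).lt_of_ne' hi⟩
  have hsum : ∑ j, C j * (V * u j x) / util (u j) δ ≤ V := by
    simpa only [util_single] using
      hδ.sum_mul_util_div_util_le hpos (isDistribution_single x hV.le)
  have hterm : C i * (V * u i x) / util (u i) δ ≤ V :=
    (single_le_sum (f := fun j => C j * (V * u j x) / util (u j) δ)
      (fun j _ => div_nonneg (mul_nonneg (hC j) (mul_nonneg hV.le (hu j x))) (hnonneg j))
      (mem_univ i)).trans hsum
  rw [div_le_iff₀ (hpos i hi), mul_left_comm] at hterm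
  exact le_of_mul_le_mul_left hterm hV

end IsNashDistribution

end NashProduct

theorem nash_utility_bounds_general {A N : Type*} [Fintype A] [Nonempty A] [Fintype N]
    (u : N → A → ℝ) (hu : ∀ i x, 0 ≤ u i x)
    (C : N → ℝ) (hC : ∀ i, 0 ≤ C i)
    (hacc : ∀ i, C i ≠ 0 → ∃ x, 0 < u i x)
    (δ : A → ℝ) (hδ : IsNashDistribution u C δ) (i : N) :
    C i * univ.sup' univ_nonempty (u i) ≤ util (u i) δ ∧
      util (u i) δ ≤ (∑ j, C j) * univ.sup' univ_nonempty (u i) := by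
  obtain ⟨x, -, hx⟩ := exists_mem_eq_sup' univ_nonempty (u i)
  exact ⟨hx ▸ hδ.mul_le_util hu hC hacc i x, hδ.1.util_le_mul_sup' (u i)⟩

theorem nash_utility_bounds {A N : Type*} [Fintype A] [Nonempty A] [Fintype N]
    (u : N → A → ℝ) (hu : ∀ i x, 0 ≤ u i x)
    (C : N → ℝ) (hC : ∀ i, 0 < C i)
    (hacc : ∀ i, ∃ x, 0 < u i x)
    (hnorm : ∀ i, IsLeast {t : ℝ | ∃ x, u i x = t ∧ 0 < t} 1)
    (δ : A → ℝ) (hδ : IsNashDistribution u C δ) :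
    ∀ i, C i ≤ util (u i) δ ∧
      util (u i) δ ≤ (∑ j, C j) * (Finset.univ.sup' Finset.univ_nonempty (u i)) := by
  intro i
  obtain ⟨x, hx, -⟩ := (hnorm i).1
  have hone : 1 ≤ univ.sup' univ_nonempty (u i) := hx ▸ le_sup' (u i) (mem_univ x)
  have hbounds := nash_utility_bounds_general u hu C (fun j => (hC j).le) (fun j _ => hacc j) δ hδ i
  exact hbounds.imp_left (le_mul_of_one_le_right (hC i).le hone).trans
end

section
/- Suppose C is a contribution profile with C_i > 0 for all i ∈ N, Σ_{i∈N} C_i = 1, and every agent has at least one acceptable project. Let δ ∈ Δ(1) satisfy δ(x) > 0 for all x ∈ A, and define δ'(x) = Σ_{i∈N} C_i · (u_i(x)/u_i(δ)) · δ(x) for all x ∈ A. Then Σ_{i∈N} C_i · (ln u_i(δ') − ln u_i(δ)) ≥ (1/2) · (Σ_{x∈A} |δ'(x) − δ(x)|)² ≥ 0, where ln denotes the natural logarithm. -/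
/-! The share of agent `i` in project `x`, `w i x = u i x / util (u i) δ * δ x`, is a probability
vector over the projects, and the new distribution is the mixture `δ' = ∑ i, C i * w i`. The ratio
`util (u i) δ' / util (u i) δ` is the `w i`-average of `δ' / δ`, so by Jensen's inequality for `log`
the logarithmic gain of agent `i` is at least `∑ x, w i x * log (δ' x / δ x)`. Averaging over the
agents bounds the total gain below by the Kullback–Leibler divergence
`∑ x, δ' x * log (δ' x / δ x)`, and Pinsker's inequality concludes.

Pinsker's inequality follows by Cauchy–Schwarz from the scalar bound
`3 * (t - 1) ^ 2 ≤ (2 * t + 4) * klFun t`, where `klFun t = t * log t + 1 - t`. The difference of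
the two sides is convex, with second derivative `4 * (log t - (1 - t⁻¹))`, and
minimal at `t = 1`. -/

open Finset

section Jensen

variable {𝕜 E β ι : Type*} [Field 𝕜] [LinearOrder 𝕜] [IsStrictOrderedRing 𝕜] [AddCommGroup E]
  [AddCommGroup β] [PartialOrder β] [IsOrderedAddMonoid β] [Module 𝕜 E] [Module 𝕜 β]
  [IsStrictOrderedModule 𝕜 β]

lemma concaveOn_le_map_sum_of_ne_zero {D : Set E} {f : E → β} {s : Finset ι} {w : ι → 𝕜}
    {p : ι → E} (hf : ConcaveOn 𝕜 D f) (hw : ∀ i ∈ s, 0 ≤ w i) (hw_sum : ∑ i ∈ s, w i = 1)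
    (hmem : ∀ i ∈ s, w i ≠ 0 → p i ∈ D) :
    ∑ i ∈ s, w i • f (p i) ≤ f (∑ i ∈ s, w i • p i) := by
  classical
  have hJensen := hf.le_map_sum (t := {i ∈ s | w i ≠ 0}) (w := w) (p := p)
    (fun i hi ↦ hw i (mem_of_mem_filter i hi)) (by rwa [sum_filter_ne_zero])
    (fun i hi ↦ hmem i (mem_of_mem_filter i hi) (mem_filter.1 hi).2)
  rwa [sum_filter_of_ne fun i _ h ↦ left_ne_zero_of_smul h,
    sum_filter_of_ne fun i _ h ↦ left_ne_zero_of_smul h] at hJensen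

end Jensen

section Pinsker

open InformationTheory

lemma hasDerivAt_mul_add_const (a b t : ℝ) : HasDerivAt (fun t ↦ a * t + b) a t := by
  simpa using ((hasDerivAt_id t).const_mul a).add_const b

lemma hasDerivAt_mul_klFun_sub_sq {t : ℝ} (ht : t ≠ 0) :
    HasDerivAt (fun t ↦ (2 * t + 4) * klFun t - 3 * (t - 1) ^ 2)
      (2 * klFun t + (2 * t + 4) * Real.log t - 6 * (t - 1)) t := by
  have hsq : HasDerivAt (fun t : ℝ ↦ 3 * (t - 1) ^ 2) (6 * (t - 1)) t :=
    ((((hasDerivAt_id t).sub_const 1).pow 2).const_mul 3).congr_deriv (by simp; ring)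
  exact ((hasDerivAt_mul_add_const 2 4 t).mul (hasDerivAt_klFun ht)).sub hsq

lemma hasDerivAt_deriv_mul_klFun_sub_sq {t : ℝ} (ht : t ≠ 0) :
    HasDerivAt (fun t ↦ 2 * klFun t + (2 * t + 4) * Real.log t - 6 * (t - 1))
      (4 * (Real.log t - (1 - t⁻¹))) t := by
  have hsub : HasDerivAt (fun t : ℝ ↦ 6 * (t - 1)) 6 t := by
    simpa using ((hasDerivAt_id t).sub_const 1).const_mul 6
  refine ((((hasDerivAt_klFun ht).const_mul 2).add
    ((hasDerivAt_mul_add_const 2 4 t).mul (Real.hasDerivAt_log ht))).sub hsub).congr_deriv ?_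
  field_simp
  ring

lemma convexOn_mul_klFun_sub_sq :
    ConvexOn ℝ (Set.Ici 0) fun t ↦ (2 * t + 4) * klFun t - 3 * (t - 1) ^ 2 := by
  have hpos {t : ℝ} (ht : t ∈ interior (Set.Ici 0)) : 0 < t := by simpa using ht
  exact convexOn_of_hasDerivWithinAt2_nonneg (convex_Ici 0) (by fun_prop)
    (fun t ht ↦ (hasDerivAt_mul_klFun_sub_sq (hpos ht).ne').hasDerivWithinAt)
    (fun t ht ↦ (hasDerivAt_deriv_mul_klFun_sub_sq (hpos ht).ne').hasDerivWithinAt)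
    (fun t ht ↦ by linarith [Real.one_sub_inv_le_log_of_pos (hpos ht)])

/-- With the factor `2 * t + 4` both sides agree to third order at `t = 1`. -/
lemma three_mul_sub_one_sq_le_mul_klFun {t : ℝ} (ht : 0 ≤ t) :
    3 * (t - 1) ^ 2 ≤ (2 * t + 4) * klFun t := by
  have hderiv := (hasDerivAt_mul_klFun_sub_sq one_ne_zero).hasDerivWithinAt.derivWithin
    (uniqueDiffWithinAt_Ioi 1)
  have hmin := convexOn_mul_klFun_sub_sq.isMinOn_of_rightDeriv_eq_zero (x := 1) (by simp)
    (hderiv.trans (by simp [klFun_one])) ht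
  simpa [klFun_one] using hmin

lemma mul_klFun_div {p q : ℝ} (hpq : q = 0 → p = 0) :
    q * klFun (p / q) = p * Real.log (p / q) + q - p := by
  rw [klFun_apply, mul_sub, mul_add, ← mul_assoc, mul_div_cancel_of_imp' hpq, mul_one]

lemma three_mul_sub_sq_le_mul_klFun_div {p q : ℝ} (hp : 0 ≤ p) (hq : 0 ≤ q)
    (hpq : q = 0 → p = 0) :
    3 * (p - q) ^ 2 ≤ (2 * p + 4 * q) * (q * klFun (p / q)) := by
  rcases hq.eq_or_lt' with rfl | hq
  · simp [hpq rfl]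
  calc 3 * (p - q) ^ 2 = q ^ 2 * (3 * (p / q - 1) ^ 2) := by field_simp
    _ ≤ q ^ 2 * ((2 * (p / q) + 4) * klFun (p / q)) := mul_le_mul_of_nonneg_left
        (three_mul_sub_one_sq_le_mul_klFun (div_nonneg hp hq.le)) (sq_nonneg q)
    _ = (2 * p + 4 * q) * (q * klFun (p / q)) := by field_simp

variable {ι : Type*} {s : Finset ι} {p q : ι → ℝ}

lemma sq_sum_abs_sub_le_mul_sum_klFun (hp : ∀ i ∈ s, 0 ≤ p i) (hq : ∀ i ∈ s, 0 ≤ q i)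
    (hpq : ∀ i ∈ s, q i = 0 → p i = 0) :
    (∑ i ∈ s, |p i - q i|) ^ 2 ≤
      (∑ i ∈ s, (2 * p i + 4 * q i) / 3) * ∑ i ∈ s, q i * klFun (p i / q i) := by
  refine sum_sq_le_sum_mul_sum_of_sq_le_mul s (fun i hi ↦ ?_) (fun i hi ↦ ?_) fun i hi ↦ ?_
  · linarith [hp i hi, hq i hi]
  · exact mul_nonneg (hq i hi) (klFun_nonneg (div_nonneg (hp i hi) (hq i hi)))
  · rw [sq_abs]
    linarith [three_mul_sub_sq_le_mul_klFun_div (hp i hi) (hq i hi) (hpq i hi)]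

/-- **Pinsker's inequality**. Where `q i = 0`, the junk value `0 * log (0 / 0) = 0` is the usual
convention for the divergence. -/
lemma sq_sum_abs_sub_le_mul_sum_mul_log_div (hp : ∀ i ∈ s, 0 ≤ p i) (hq : ∀ i ∈ s, 0 ≤ q i)
    (hpq : ∀ i ∈ s, q i = 0 → p i = 0) (hmass : ∑ i ∈ s, p i = ∑ i ∈ s, q i) :
    (∑ i ∈ s, |p i - q i|) ^ 2 ≤
      2 * (∑ i ∈ s, q i) * ∑ i ∈ s, p i * Real.log (p i / q i) := by
  have hweight : ∑ i ∈ s, (2 * p i + 4 * q i) / 3 = 2 * ∑ i ∈ s, q i := by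
    rw [← sum_div, sum_add_distrib, ← mul_sum, ← mul_sum, hmass]
    ring
  have hkl : ∑ i ∈ s, q i * klFun (p i / q i) = ∑ i ∈ s, p i * Real.log (p i / q i) := by
    rw [sum_congr rfl fun i hi ↦ mul_klFun_div (hpq i hi), sum_sub_distrib, sum_add_distrib, hmass,
      add_sub_cancel_right]
  simpa only [hweight, hkl] using sq_sum_abs_sub_le_mul_sum_klFun hp hq hpq

end Pinsker

section UtilShare

variable {A : Type*} [Fintype A] {u δ p : A → ℝ}

/-- The fraction of an agent's utility of `δ` that project `x` provides, the proportion in which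
the agent spreads a contribution in one step of the dynamics. It is `0` when that utility is `0`. -/
noncomputable def utilShare (u δ : A → ℝ) (x : A) : ℝ :=
  u x / util u δ * δ x

lemma util_pos_iff (hu : ∀ x, 0 ≤ u x) (hδ : ∀ x, 0 ≤ δ x) :
    0 < util u δ ↔ ∃ x, 0 < δ x ∧ 0 < u x := by
  rw [util, sum_pos_iff_of_nonneg fun x _ ↦ mul_nonneg (hδ x) (hu x)]
  simp only [mem_univ, true_and]
  refine exists_congr fun x ↦ ⟨fun h ↦ ⟨?_, ?_⟩, fun h ↦ mul_pos h.1 h.2⟩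
  · exact pos_of_mul_pos_left h (hu x)
  · exact pos_of_mul_pos_right h (hδ x)

lemma utilShare_nonneg (hu : ∀ x, 0 ≤ u x) (hδ : ∀ x, 0 ≤ δ x) (x : A) : 0 ≤ utilShare u δ x :=
  mul_nonneg (div_nonneg (hu x) (sum_nonneg fun y _ ↦ mul_nonneg (hδ y) (hu y))) (hδ x)

lemma sum_utilShare (h : util u δ ≠ 0) : ∑ x, utilShare u δ x = 1 := by
  simp_rw [utilShare, div_mul_eq_mul_div, mul_comm (u _), ← sum_div]
  exact div_self h

lemma sum_utilShare_mul_div (hp : ∀ x, δ x = 0 → p x = 0) :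
    ∑ x, utilShare u δ x * (p x / δ x) = util u p / util u δ := by
  rw [util, sum_div]
  refine sum_congr rfl fun x _ ↦ ?_
  rw [utilShare, mul_assoc, mul_div_cancel_of_imp' (hp x)]
  ring

lemma sum_utilShare_mul_log_div_le (hu : ∀ x, 0 ≤ u x) (hδ : ∀ x, 0 ≤ δ x)
    (hutil : 0 < util u δ) (hp : ∀ x, 0 ≤ p x) (hp_zero : ∀ x, δ x = 0 → p x = 0)
    (hp_pos : ∀ x, utilShare u δ x ≠ 0 → 0 < p x) :
    ∑ x, utilShare u δ x * Real.log (p x / δ x) ≤ Real.log (util u p) - Real.log (util u δ) := by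
  have hratio : ∀ x ∈ univ, utilShare u δ x ≠ 0 → p x / δ x ∈ Set.Ioi 0 := fun x _ hx ↦
    div_pos (hp_pos x hx) ((hδ x).lt_of_ne' (right_ne_zero_of_mul hx))
  have hutil' : 0 < util u p := by
    obtain ⟨x, hδx, hux⟩ := (util_pos_iff hu hδ).1 hutil
    have hshare : utilShare u δ x ≠ 0 := by unfold utilShare; positivity
    exact (util_pos_iff hu hp).2 ⟨x, hp_pos x hshare, hux⟩
  rw [← Real.log_div hutil'.ne' hutil.ne', ← sum_utilShare_mul_div hp_zero]
  simpa only [smul_eq_mul] using concaveOn_le_map_sum_of_ne_zero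
    strictConcaveOn_log_Ioi.concaveOn (fun x _ ↦ utilShare_nonneg hu hδ x)
    (sum_utilShare hutil.ne') hratio

end UtilShare

section NashStep

variable {A N : Type*} [Fintype A] [Fintype N] {u : N → A → ℝ} {C : N → ℝ} {δ : A → ℝ}

/-- One step of the Nash dynamics from `δ`, with values `δ' x` in the paper: each agent
redistributes the contribution `C i` in proportion to the utility that the projects provide. -/
noncomputable def nashStep (u : N → A → ℝ) (C : N → ℝ) (δ : A → ℝ) (x : A) : ℝ :=
  ∑ i, C i * utilShare (u i) δ x

lemma nashStep_nonneg (hu : ∀ i x, 0 ≤ u i x) (hC : ∀ i, 0 ≤ C i) (hδ : ∀ x, 0 ≤ δ x) (x : A) :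
    0 ≤ nashStep u C δ x :=
  sum_nonneg fun i _ ↦ mul_nonneg (hC i) (utilShare_nonneg (hu i) hδ x)

lemma nashStep_eq_zero {x : A} (hx : δ x = 0) : nashStep u C δ x = 0 := by
  simp [nashStep, utilShare, hx]

lemma nashStep_pos (hu : ∀ i x, 0 ≤ u i x) (hC : ∀ i, 0 < C i) (hδ : ∀ x, 0 ≤ δ x) {i : N} {x : A}
    (hx : utilShare (u i) δ x ≠ 0) : 0 < nashStep u C δ x :=
  sum_pos' (fun j _ ↦ mul_nonneg (hC j).le (utilShare_nonneg (hu j) hδ x))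
    ⟨i, mem_univ i, mul_pos (hC i) ((utilShare_nonneg (hu i) hδ x).lt_of_ne' hx)⟩

lemma sum_nashStep_mul (f : A → ℝ) :
    ∑ x, nashStep u C δ x * f x = ∑ i, C i * ∑ x, utilShare (u i) δ x * f x := by
  simp_rw [nashStep, sum_mul, mul_sum, mul_assoc]
  exact sum_comm

lemma sum_nashStep (h : ∀ i, util (u i) δ ≠ 0) : ∑ x, nashStep u C δ x = ∑ i, C i := by
  simpa [sum_utilShare, h] using sum_nashStep_mul (u := u) (C := C) (δ := δ) fun _ ↦ 1

lemma sum_nashStep_mul_log_div_le (hu : ∀ i x, 0 ≤ u i x) (hC : ∀ i, 0 < C i)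
    (hδ : ∀ x, 0 ≤ δ x) (hutil : ∀ i, 0 < util (u i) δ) :
    ∑ x, nashStep u C δ x * Real.log (nashStep u C δ x / δ x) ≤
      ∑ i, C i * (Real.log (util (u i) (nashStep u C δ)) - Real.log (util (u i) δ)) := by
  rw [sum_nashStep_mul]
  refine sum_le_sum fun i _ ↦ mul_le_mul_of_nonneg_left ?_ (hC i).le
  exact sum_utilShare_mul_log_div_le (hu i) hδ (hutil i)
    (nashStep_nonneg hu (fun j ↦ (hC j).le) hδ) (fun _ ↦ nashStep_eq_zero)
    fun _ ↦ nashStep_pos hu hC hδ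

end NashStep

theorem nash_dynamics_step_inequality_general {A N : Type*} [Fintype A] [Fintype N]
    (u : N → A → ℝ) (hu : ∀ i x, 0 ≤ u i x) (C : N → ℝ) (hC : ∀ i, 0 < C i)
    (δ : A → ℝ) (hδ : IsDistribution δ (∑ i, C i)) (hutil : ∀ i, 0 < util (u i) δ) :
    (1 / 2) * (∑ x, |nashStep u C δ x - δ x|) ^ 2 ≤
      (∑ i, C i) *
        ∑ i, C i * (Real.log (util (u i) (nashStep u C δ)) - Real.log (util (u i) δ)) := by
  obtain ⟨hδ_nonneg, hδ_sum⟩ := hδ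
  have hmass : ∑ x, nashStep u C δ x = ∑ x, δ x :=
    (sum_nashStep fun i ↦ (hutil i).ne').trans hδ_sum.symm
  have hpinsker := sq_sum_abs_sub_le_mul_sum_mul_log_div (s := univ)
    (fun x _ ↦ nashStep_nonneg hu (fun i ↦ (hC i).le) hδ_nonneg x) (fun x _ ↦ hδ_nonneg x)
    (fun _ _ ↦ nashStep_eq_zero) hmass
  have hgain := mul_le_mul_of_nonneg_left (sum_nashStep_mul_log_div_le hu hC hδ_nonneg hutil)
    (sum_nonneg fun i (_ : i ∈ univ) ↦ (hC i).le)
  rw [hδ_sum] at hpinsker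
  linarith

theorem nash_dynamics_step_inequality {A N : Type*}
    [Fintype A] [Nonempty A] [Fintype N]
    (u : N → A → ℝ) (hu : ∀ i x, 0 ≤ u i x)
    (C : N → ℝ) (hC : ∀ i, 0 < C i) (hCsum : ∑ i, C i = 1)
    (hacc : ∀ i, ∃ x, 0 < u i x)
    (δ : A → ℝ) (hδ : IsDistribution δ 1) (hpos : ∀ x, 0 < δ x)
    (δ' : A → ℝ) (hδ' : ∀ x, δ' x = ∑ i, C i * (u i x / util (u i) δ) * δ x) :
    (∑ i, C i * (Real.log (util (u i) δ') - Real.log (util (u i) δ))) ≥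
        (1 / 2) * (∑ x, |δ' x - δ x|) ^ 2 ∧
      (1 / 2) * (∑ x, |δ' x - δ x|) ^ 2 ≥ 0 := by
  have hstep : δ' = nashStep u C δ := by
    funext x
    simp_rw [hδ' x, nashStep, utilShare, mul_assoc]
  have hutil (i : N) : 0 < util (u i) δ :=
    (util_pos_iff (hu i) hδ.1).2 ((hacc i).imp fun x hx ↦ ⟨hpos x, hx⟩)
  have hgain := nash_dynamics_step_inequality_general u hu C hC δ (hCsum.symm ▸ hδ) hutil
  rw [hCsum, one_mul, ← hstep] at hgain
  exact ⟨hgain, by positivity⟩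
end
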